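/- arXiv:1201.0697 — 2 statements merged into one kernel-verified Lean document; each statement's English description precedes it below -/
import Mathlib

section
/- For every real number c with 0 ≤ c < √6 − √3 there exists a natural number R_c such that for every integer r ≥ R_c and every subset W ⊆ V(G_r) with |W| ≤ 3r² (i.e. |W| ≤ |V(G_r)|/2), one has |ℬ_{G_r}(W)| ≥ c · √(|W| + c²/4) − c²/2. -/
/-- Adjacency of the infinite hexagonal grid `G∞` in brick-wall coordinates on `ℤ × ℤ`:
`(x,y)` and `(x',y')` are adjacent iff `y' = y` and `|x' - x| = 1`, or
`x' = x` and `|y' - y| = 1` and `x + min y y'` is even. -/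
def hexAdj (v w : ℤ × ℤ) : Prop :=
  (v.2 = w.2 ∧ (v.1 - w.1).natAbs = 1) ∨
  (v.1 = w.1 ∧ (v.2 - w.2).natAbs = 1 ∧ Even (v.1 + min v.2 w.2))

/-- The neighborhood `𝒩(W)`: vertices not in `W` adjacent to some vertex of `W`. -/
def hexNbhd (W : Set (ℤ × ℤ)) : Set (ℤ × ℤ) :=
  {v | v ∉ W ∧ ∃ w ∈ W, hexAdj v w}

/-- The boundary `ℬ(W)`: vertices of `W` adjacent to some vertex not in `W`. -/
def hexBdry (W : Set (ℤ × ℤ)) : Set (ℤ × ℤ) :=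
  {v | v ∈ W ∧ ∃ w, w ∉ W ∧ hexAdj v w}

/-- The outgoing edges `ℰ(W)`, encoded as ordered pairs `(v, w)` with `v ∈ W`, `w ∉ W`
and `v` adjacent to `w`; each edge with exactly one endpoint in `W` corresponds to
exactly one such pair. -/
def hexCutEdges (W : Set (ℤ × ℤ)) : Set ((ℤ × ℤ) × (ℤ × ℤ)) :=
  {p | p.1 ∈ W ∧ p.2 ∉ W ∧ hexAdj p.1 p.2}

/-- The hexagonal cell `C(a,b)`, with vertex set `{(2a+b+i, b+j) : i ∈ {0,1,2}, j ∈ {0,1}}`. -/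
def hexCell (a b : ℤ) : Set (ℤ × ℤ) :=
  {(2*a+b, b), (2*a+b+1, b), (2*a+b+2, b),
   (2*a+b, b+1), (2*a+b+1, b+1), (2*a+b+2, b+1)}

/-- The vertex set `V(G_r)` of the finite hexagonal grid of radius `r`: the union of the
cells `C(a,b)` with `(|a| + |b| + |a+b|)/2 ≤ r - 1`. -/
def gridVerts (r : ℕ) : Set (ℤ × ℤ) :=
  {v | ∃ a b : ℤ, a.natAbs + b.natAbs + (a+b).natAbs ≤ 2*(r-1) ∧ v ∈ hexCell a b}

/-- `𝒩_{G_r}(W)`: vertices of `V(G_r) \ W` adjacent to some vertex of `W`. -/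
def hexNbhdIn (r : ℕ) (W : Set (ℤ × ℤ)) : Set (ℤ × ℤ) :=
  {v | v ∈ gridVerts r ∧ v ∉ W ∧ ∃ w ∈ W, hexAdj v w}

/-- `ℬ_{G_r}(W)`: vertices of `W` adjacent to some vertex of `V(G_r) \ W`. -/
def hexBdryIn (r : ℕ) (W : Set (ℤ × ℤ)) : Set (ℤ × ℤ) :=
  {v | v ∈ W ∧ ∃ w, w ∈ gridVerts r ∧ w ∉ W ∧ hexAdj v w}

/-- `ℰ_{G_r}(W)`: the edges of `G_r` with exactly one endpoint in `W ⊆ V(G_r)`, encoded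
as ordered pairs `(v, w)` with `v ∈ W`, `w ∈ V(G_r) \ W`, `v` adjacent to `w`. -/
def hexCutEdgesIn (r : ℕ) (W : Set (ℤ × ℤ)) : Set ((ℤ × ℤ) × (ℤ × ℤ)) :=
  {p | p.1 ∈ W ∧ p.2 ∈ gridVerts r ∧ p.2 ∉ W ∧ hexAdj p.1 p.2}

/-- The index `ind_i(x,y)` of the direction-`i` row containing `(x,y)`
(directions numbered `0, 1, 2` for the paper's `1, 2, 3`):
`ind_1 = y`, `ind_2 = ⌊(y-x)/2⌋`, `ind_3 = ⌊(x+y)/2⌋`. -/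
def rowInd : Fin 3 → ℤ × ℤ → ℤ
  | 0, v => v.2
  | 1, v => Int.fdiv (v.2 - v.1) 2
  | 2, v => Int.fdiv (v.1 + v.2) 2

/-- The linear parameter `p_i` along direction-`i` rows:
`p_1 = x`, `p_2 = x + y`, `p_3 = x - y`. -/
def rowParam : Fin 3 → ℤ × ℤ → ℤ
  | 0, v => v.1
  | 1, v => v.1 + v.2
  | 2, v => v.1 - v.2

/-- A set of integers is consecutive if it contains every integer between any two of
its elements. -/
def ConsecutiveSet (S : Set ℤ) : Prop :=
  ∀ a ∈ S, ∀ b ∈ S, ∀ k : ℤ, a ≤ k → k ≤ b → k ∈ S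

/-- `v` is an outermost neighbor of `W` for direction `i`: the direction-`i` row of `v`
is gray, and the parameter of `v` is `m - 1` or `M + 1`, where `m` and `M` are the
minimum and maximum of the parameter over `W` intersected with that row. -/
def IsOutermostNeighbor (W : Set (ℤ × ℤ)) (i : Fin 3) (v : ℤ × ℤ) : Prop :=
  (rowParam i v + 1 ∈ rowParam i '' {w ∈ W | rowInd i w = rowInd i v} ∧
    ∀ q ∈ rowParam i '' {w ∈ W | rowInd i w = rowInd i v}, rowParam i v + 1 ≤ q) ∨
  (rowParam i v - 1 ∈ rowParam i '' {w ∈ W | rowInd i w = rowInd i v} ∧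
    ∀ q ∈ rowParam i '' {w ∈ W | rowInd i w = rowInd i v}, q ≤ rowParam i v - 1)

open Finset

/-- Symmetric coordinates of a vertex: the three row indices, oriented so that `V(G_r)` becomes
the set of integer triples with entries in `[1 - r, r]` and sum `1` or `2`. -/
def hexCoord : Fin 3 → ℤ × ℤ → ℤ
  | 0, v => v.2
  | 1, v => -((v.2 - v.1) / 2)
  | 2, v => 1 - (v.1 + v.2) / 2

/-- The sum of the three coordinates of a vertex, which is `1` or `2`. -/
def hexSum (v : ℤ × ℤ) : ℤ := hexCoord 0 v + hexCoord 1 v + hexCoord 2 v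

lemma hexSum_eq (v : ℤ × ℤ) : hexSum v = 1 ∨ hexSum v = 2 := by
  simp only [hexSum, hexCoord]; omega

lemma hexCoord_add {i j k : Fin 3} (hij : i ≠ j) (hik : i ≠ k) (hjk : j ≠ k) (v : ℤ × ℤ) :
    hexCoord i v + hexCoord j v + hexCoord k v = hexSum v := by
  unfold hexSum
  fin_cases i <;> fin_cases j <;> fin_cases k <;> simp_all <;> ring

lemma exists_third {i j : Fin 3} (hij : i ≠ j) : ∃ k, i ≠ k ∧ j ≠ k := by
  revert i j; decide

lemma eq_or_eq_or_eq {i j k : Fin 3} (hij : i ≠ j) (hik : i ≠ k) (hjk : j ≠ k) (l : Fin 3) :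
    l = i ∨ l = j ∨ l = k := by
  revert i j k l; decide

lemma eq_of_hexCoord_eq {i j : Fin 3} (hij : i ≠ j) {v w : ℤ × ℤ}
    (hi : hexCoord i v = hexCoord i w) (hj : hexCoord j v = hexCoord j w)
    (hs : hexSum v = hexSum w) : v = w := by
  obtain ⟨k, hik, hjk⟩ := exists_third hij
  have hk : hexCoord k v = hexCoord k w := by
    have h₁ := hexCoord_add hij hik hjk v
    have h₂ := hexCoord_add hij hik hjk w
    omega
  have key : ∀ l, hexCoord l v = hexCoord l w := by
    intro l
    rcases eq_or_eq_or_eq hij hik hjk l with rfl | rfl | rfl <;> assumption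
  have h0 := key 0
  have h1 := key 1
  have h2 := key 2
  simp only [hexSum, hexCoord] at h0 h1 h2 hs
  ext <;> omega

lemma exists_hexCoord_eq {i j : Fin 3} (hij : i ≠ j) (a b : ℤ) {e : ℤ} (he : e = 1 ∨ e = 2) :
    ∃ v, hexCoord i v = a ∧ hexCoord j v = b ∧ hexSum v = e := by
  have key : ∀ x y z : ℤ, x + y + z = 1 ∨ x + y + z = 2 →
      ∃ v, hexCoord 0 v = x ∧ hexCoord 1 v = y ∧ hexCoord 2 v = z := by
    intro x y z h
    refine ⟨(1 - z + y, x), ?_, ?_, ?_⟩ <;> simp only [hexCoord] <;> omega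
  unfold hexSum
  fin_cases i <;> fin_cases j <;> first | exact absurd rfl hij | skip
  · obtain ⟨v, h0, h1, h2⟩ := key a b (e - a - b) (by omega)
    exact ⟨v, h0, h1, by omega⟩
  · obtain ⟨v, h0, h1, h2⟩ := key a (e - a - b) b (by omega)
    exact ⟨v, h0, h2, by omega⟩
  · obtain ⟨v, h0, h1, h2⟩ := key b a (e - a - b) (by omega)
    exact ⟨v, h1, h0, by omega⟩
  · obtain ⟨v, h0, h1, h2⟩ := key (e - a - b) a b (by omega)
    exact ⟨v, h1, h2, by omega⟩
  · obtain ⟨v, h0, h1, h2⟩ := key b (e - a - b) a (by omega)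
    exact ⟨v, h2, h0, by omega⟩
  · obtain ⟨v, h0, h1, h2⟩ := key (e - a - b) b a (by omega)
    exact ⟨v, h2, h1, by omega⟩

lemma mem_hexCell_iff (a b : ℤ) (v : ℤ × ℤ) :
    v ∈ hexCell a b ↔ (v.1 = 2 * a + b ∨ v.1 = 2 * a + b + 1 ∨ v.1 = 2 * a + b + 2) ∧
      (v.2 = b ∨ v.2 = b + 1) := by
  simp only [hexCell, Set.mem_insert_iff, Set.mem_singleton_iff, Prod.ext_iff]
  tauto

lemma mem_gridVerts_iff {r : ℕ} (hr : 1 ≤ r) (v : ℤ × ℤ) :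
    v ∈ gridVerts r ↔ ∀ i, 1 - (r : ℤ) ≤ hexCoord i v ∧ hexCoord i v ≤ r := by
  have hs := hexSum_eq v
  simp only [gridVerts, Set.mem_ofPred_eq, mem_hexCell_iff, Fin.forall_fin_succ, Fin.isValue,
    IsEmpty.forall_iff, and_true]
  constructor
  · rintro ⟨a, b, h, h₁, h₂⟩
    simp only [hexCoord, Fin.succ_zero_eq_one, Fin.succ_one_eq_two]
    omega
  · intro h
    simp only [hexSum, hexCoord, Fin.succ_zero_eq_one, Fin.succ_one_eq_two] at h hs
    obtain ⟨x, y⟩ := v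
    simp only at h hs ⊢
    obtain ⟨m, hm⟩ : ∃ m, m = (y - x) / 2 := ⟨_, rfl⟩
    obtain ⟨n, hn⟩ : ∃ n, n = (x + y) / 2 := ⟨_, rfl⟩
    rw [← hm, ← hn] at h hs
    have hb : ∃ a b : ℤ, (y = b ∨ y = b + 1) ∧ (-m = a ∨ -m = a + 1) ∧
        (1 - n = -(a + b) ∨ 1 - n = -(a + b) + 1) ∧ 1 - (r : ℤ) ≤ a ∧ a ≤ r - 1 ∧
        1 - (r : ℤ) ≤ b ∧ b ≤ r - 1 ∧ 1 - (r : ℤ) ≤ a + b ∧ a + b ≤ r - 1 := by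
      rcases hs with hs | hs
      · by_cases hy : y = r
        · exact ⟨-m, y - 1, by omega⟩
        by_cases hm' : -m = r
        · exact ⟨-m - 1, y, by omega⟩
        by_cases hn' : 1 - n = r
        · exact ⟨-m, y, by omega⟩
        by_cases hy : y = 1 - r
        · by_cases hm' : -m = 1 - r
          · exact ⟨-m, y, by omega⟩
          · exact ⟨-m - 1, y, by omega⟩
        · exact ⟨-m, y - 1, by omega⟩
      · by_cases hy : y = 1 - r
        · exact ⟨-m - 1, y, by omega⟩
        by_cases hm' : -m = 1 - r
        · exact ⟨-m, y - 1, by omega⟩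
        by_cases hn' : 1 - n = 1 - r
        · exact ⟨-m - 1, y - 1, by omega⟩
        by_cases hy : y = r
        · by_cases hm' : -m = r
          · exact ⟨-m - 1, y - 1, by omega⟩
          · exact ⟨-m, y - 1, by omega⟩
        · exact ⟨-m - 1, y, by omega⟩
    obtain ⟨a, b, h₁, h₂, h₃, h₄⟩ := hb
    exact ⟨a, b, by omega, by omega, by omega⟩

lemma mem_gridVerts_of_coords {r : ℕ} (hr : 1 ≤ r) {i j k : Fin 3} (hij : i ≠ j) (hik : i ≠ k)
    (hjk : j ≠ k) {v : ℤ × ℤ} (hi : 1 - (r : ℤ) ≤ hexCoord i v ∧ hexCoord i v ≤ r)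
    (hj : 1 - (r : ℤ) ≤ hexCoord j v ∧ hexCoord j v ≤ r)
    (hk : 1 - (r : ℤ) ≤ hexCoord k v ∧ hexCoord k v ≤ r) : v ∈ gridVerts r := by
  rw [mem_gridVerts_iff hr]
  intro l
  rcases eq_or_eq_or_eq hij hik hjk l with rfl | rfl | rfl <;> assumption

lemma gridVerts_finite {r : ℕ} (hr : 1 ≤ r) : (gridVerts r).Finite := by
  refine (Set.finite_Icc ((-4 * r, -4 * r) : ℤ × ℤ) (4 * r, 4 * r)).subset fun v hv ↦ ?_
  have h := (mem_gridVerts_iff hr v).1 hv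
  have h0 := h 0
  have h1 := h 1
  simp only [hexCoord] at h0 h1
  simp only [Set.mem_Icc, Prod.le_def]
  omega

/-- Along a row, the boundary of `W` separates the vertices in `W` from those not in `W`. -/
lemma exists_hexBdryIn_of_mixed_row {r : ℕ} (hr : 1 ≤ r) {W : Set (ℤ × ℤ)} (i : Fin 3)
    {v w : ℤ × ℤ} (hv : v ∈ gridVerts r) (hw : w ∈ gridVerts r) (hvW : v ∈ W) (hwW : w ∉ W)
    (hvw : hexCoord i v = hexCoord i w) :
    ∃ u ∈ hexBdryIn r W, hexCoord i u = hexCoord i v := by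
  obtain ⟨n, hn⟩ : ∃ n, n = (v.1 - w.1).natAbs + (v.2 - w.2).natAbs := ⟨_, rfl⟩
  induction n using Nat.strong_induction_on generalizing v with
  | _ n ih =>
  have step : ∃ v' ∈ gridVerts r, hexAdj v v' ∧ hexCoord i v' = hexCoord i v ∧
      (v'.1 - w.1).natAbs + (v'.2 - w.2).natAbs < n := by
    have hne : v ≠ w := fun h ↦ hwW (h ▸ hvW)
    clear ih
    subst hn
    rw [mem_gridVerts_iff hr] at hv hw
    simp only [mem_gridVerts_iff hr, hexAdj, Fin.forall_fin_succ, Fin.isValue,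
      IsEmpty.forall_iff, and_true, Fin.succ_zero_eq_one, Fin.succ_one_eq_two] at hv hw ⊢
    obtain ⟨x, y⟩ := v
    obtain ⟨x', y'⟩ := w
    simp only [ne_eq, Prod.mk.injEq, Int.even_iff] at *
    fin_cases i <;> simp only [hexCoord, Prod.exists] at *
    · rcases lt_or_ge x x' with h | h
      · exact ⟨x + 1, y, by omega⟩
      · exact ⟨x - 1, y, by omega⟩
    · rcases lt_or_ge (x + y) (x' + y') with h | h <;>
        rcases Int.emod_two_eq_zero_or_one (x + y) with h2 | h2
      · exact ⟨x, y + 1, by omega⟩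
      · exact ⟨x + 1, y, by omega⟩
      · exact ⟨x - 1, y, by omega⟩
      · exact ⟨x, y - 1, by omega⟩
    · rcases lt_or_ge (x - y) (x' - y') with h | h <;>
        rcases Int.emod_two_eq_zero_or_one (x + y) with h2 | h2
      · exact ⟨x + 1, y, by omega⟩
      · exact ⟨x, y - 1, by omega⟩
      · exact ⟨x, y + 1, by omega⟩
      · exact ⟨x - 1, y, by omega⟩
  obtain ⟨v', hv', hadj, hcoord, hlt⟩ := step
  by_cases hv'W : v' ∈ W
  · obtain ⟨u, hu, huc⟩ := ih _ hlt hv' hv'W (hcoord.trans hvw) rfl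
    exact ⟨u, hu, huc.trans hcoord⟩
  · exact ⟨v, ⟨hvW, v', hv', hv'W, hadj⟩, rfl⟩

/-- A set of vertices meeting at most `#A` rows of one direction and `#B` rows of another has at
most `2 * #A * #B` elements. -/
lemma card_le_of_coords_mem {i j : Fin 3} (hij : i ≠ j) {X : Finset (ℤ × ℤ)} {A B : Finset ℤ}
    (h : ∀ v ∈ X, hexCoord i v ∈ A ∧ hexCoord j v ∈ B) : #X ≤ 2 * (#A * #B) := by
  have hle : #X ≤ #((A ×ˢ B) ×ˢ ({1, 2} : Finset ℤ)) := by
    refine card_le_card_of_injOn (fun v ↦ ((hexCoord i v, hexCoord j v), hexSum v))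
      (fun v hv ↦ ?_) fun v _ w _ hvw ↦ ?_
    · simpa [hexSum_eq v] using h v hv
    · simp only [Prod.mk.injEq] at hvw
      exact eq_of_hexCoord_eq hij hvw.1.1 hvw.1.2 hvw.2
  simp only [card_product] at hle
  rw [card_pair (by norm_num)] at hle
  linarith

/-- Pairs from `I × J` lying on the hook formed by the largest element of `I` and the smallest
element of `J` have distinct sums. -/
lemma card_sum_mem_le_erase {I J K : Finset ℤ} (hI : I.Nonempty) (hJ : J.Nonempty) :
    #{p ∈ I ×ˢ J | p.1 + p.2 ∈ K} ≤
      #{p ∈ I.erase (I.max' hI) ×ˢ J.erase (J.min' hJ) | p.1 + p.2 ∈ K} + #K := by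
  set a := I.max' hI
  set b := J.min' hJ
  have hsub : {p ∈ I ×ˢ J | p.1 + p.2 ∈ K} ⊆
      {p ∈ I.erase a ×ˢ J.erase b | p.1 + p.2 ∈ K} ∪
        {p ∈ I ×ˢ J | p.1 + p.2 ∈ K ∧ (p.1 = a ∨ p.2 = b)} := by
    intro p hp
    simp only [mem_union, mem_filter, mem_product, mem_erase] at hp ⊢
    tauto
  refine (card_le_card hsub).trans ((card_union_le _ _).trans (Nat.add_le_add_left ?_ _))
  refine card_le_card_of_injOn (fun p ↦ p.1 + p.2) (fun p hp ↦ ?_) fun p hp q hq hpq ↦ ?_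
  · simp only [coe_filter, mem_product, Set.mem_ofPred_eq] at hp
    exact hp.2.1
  · simp only [coe_filter, mem_product, Set.mem_ofPred_eq] at hp hq hpq
    have h₁ := I.le_max' _ hp.1.1
    have h₂ := I.le_max' _ hq.1.1
    have h₃ := J.min'_le _ hp.1.2
    have h₄ := J.min'_le _ hq.1.2
    ext <;> omega

lemma four_mul_card_sum_mem_le (a k : ℕ) (I J K : Finset ℤ) (hI : #I ≤ a) (hJ : #J ≤ a)
    (hK : #K ≤ k) (hka : k ≤ 2 * a + 1) :
    4 * #{p ∈ I ×ˢ J | p.1 + p.2 ∈ K} + k ^ 2 ≤ 4 * a * k + 1 := by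
  induction a generalizing I J with
  | zero =>
    have : I = ∅ := card_eq_zero.1 (by omega)
    subst this
    have : k ≤ 1 := by omega
    interval_cases k <;> simp
  | succ a ih =>
    have htriv : #{p ∈ I ×ˢ J | p.1 + p.2 ∈ K} ≤ (a + 1) * (a + 1) :=
      (card_filter_le _ _).trans (by rw [card_product]; exact Nat.mul_le_mul hI hJ)
    by_cases hk : k ≤ 2 * a + 1
    · rcases I.eq_empty_or_nonempty with rfl | hIne
      · simp; nlinarith
      rcases J.eq_empty_or_nonempty with rfl | hJne
      · simp; nlinarith
      have h := card_sum_mem_le_erase (K := K) hIne hJne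
      have := ih (I.erase (I.max' hIne)) (J.erase (J.min' hJne))
        (by rw [card_erase_of_mem (I.max'_mem hIne)]; omega)
        (by rw [card_erase_of_mem (J.min'_mem hJne)]; omega) hk
      nlinarith
    · obtain rfl | rfl : k = 2 * a + 2 ∨ k = 2 * a + 3 := by omega
      · nlinarith
      · nlinarith

/-- A set of vertices meeting at most `b` rows of each direction has at most `(3b² + 1)/2`
elements. -/
lemma card_le_of_forall_coord_mem {X : Finset (ℤ × ℤ)} {b : ℕ} {A : Fin 3 → Finset ℤ}
    (hA : ∀ i, #(A i) ≤ b) (h : ∀ v ∈ X, ∀ i, hexCoord i v ∈ A i) :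
    4 * #X ≤ 6 * b ^ 2 + 2 := by
  have hslice : ∀ e : ℤ, 4 * #{v ∈ X | hexSum v = e} + b ^ 2 ≤ 4 * b * b + 1 := by
    intro e
    have hle : #{v ∈ X | hexSum v = e} ≤
        #{p ∈ A 0 ×ˢ A 1 | p.1 + p.2 ∈ (A 2).image (fun z ↦ e - z)} := by
      refine card_le_card_of_injOn (fun v ↦ (hexCoord 0 v, hexCoord 1 v)) (fun v hv ↦ ?_)
        fun v hv w hw hvw ↦ ?_
      · simp only [coe_filter, Set.mem_ofPred_eq, mem_product, mem_image] at hv ⊢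
        refine ⟨⟨h v hv.1 0, h v hv.1 1⟩, hexCoord 2 v, h v hv.1 2, ?_⟩
        have := hv.2
        unfold hexSum at this
        omega
      · simp only [coe_filter, Set.mem_ofPred_eq, Prod.mk.injEq] at hv hw hvw
        exact eq_of_hexCoord_eq (by decide : (0 : Fin 3) ≠ 1) hvw.1 hvw.2 (hv.2.trans hw.2.symm)
    have := four_mul_card_sum_mem_le b b (A 0) (A 1) ((A 2).image fun z ↦ e - z) (hA 0) (hA 1)
      (card_image_le.trans (hA 2)) (by omega)
    omega
  have hsub : X ⊆ {v ∈ X | hexSum v = 1} ∪ {v ∈ X | hexSum v = 2} := by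
    intro v hv
    simpa [hv] using hexSum_eq v
  have h₁ := (card_le_card hsub).trans (card_union_le _ _)
  have h₂ := hslice 1
  have h₃ := hslice 2
  nlinarith

/-- If the row sets `A`, `B` of a set of vertices both contain `[1 - r, 0]` or both contain
`[1, r]`, then `r²` vertices of the region they span are outside `V(G_r)`. -/
lemma card_add_sq_le {r : ℕ} (hr : 1 ≤ r) {i j : Fin 3} (hij : i ≠ j) {X : Finset (ℤ × ℤ)}
    {A B : Finset ℤ} (hX : ∀ v ∈ X, v ∈ gridVerts r)
    (h : ∀ v ∈ X, hexCoord i v ∈ A ∧ hexCoord j v ∈ B)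
    (hAB : (Icc (1 - (r : ℤ)) 0 ⊆ A ∧ Icc (1 - (r : ℤ)) 0 ⊆ B) ∨
      (Icc 1 (r : ℤ) ⊆ A ∧ Icc 1 (r : ℤ) ⊆ B)) :
    #X + r ^ 2 ≤ 2 * (#A * #B) := by
  obtain ⟨Y, hYcard, hYmem, hYgrid⟩ : ∃ Y : Finset (ℤ × ℤ), #Y = r ^ 2 ∧
      (∀ v ∈ Y, hexCoord i v ∈ A ∧ hexCoord j v ∈ B) ∧ ∀ v ∈ Y, v ∉ gridVerts r := by
    obtain ⟨k, hik, hjk⟩ := exists_third hij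
    rcases hAB with ⟨hA, hB⟩ | ⟨hA, hB⟩
    · have hex : ∀ p : ℤ × ℤ, ∃ v,
          (p.1 + p.2 ≤ -r ∧ hexCoord i v = p.1 ∧ hexCoord j v = p.2 ∧ hexSum v = 1) ∨
          (-r < p.1 + p.2 ∧ hexCoord i v = 1 - r - p.1 ∧ hexCoord j v = 1 - r - p.2 ∧
            hexSum v = 2) := by
        intro p
        rcases le_or_gt (p.1 + p.2) (-r) with hp | hp
        · obtain ⟨v, hv⟩ := exists_hexCoord_eq hij p.1 p.2 (Or.inl rfl)
          exact ⟨v, Or.inl ⟨hp, hv⟩⟩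
        · obtain ⟨v, hv⟩ := exists_hexCoord_eq hij (1 - r - p.1) (1 - r - p.2) (Or.inr rfl)
          exact ⟨v, Or.inr ⟨hp, hv⟩⟩
      choose f hf using hex
      refine ⟨(Icc (1 - (r : ℤ)) 0 ×ˢ Icc (1 - (r : ℤ)) 0).image f, ?_, ?_, ?_⟩
      · rw [card_image_of_injective, card_product, Int.card_Icc]
        · simp [sq]
        · intro p q hpq
          have h₁ := hf p
          have h₂ := hf q
          rw [hpq] at h₁
          ext <;> omega
      · simp only [forall_mem_image, mem_product, mem_Icc]
        intro p hp
        have h₁ := hf p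
        exact ⟨hA (mem_Icc.2 (by omega)), hB (mem_Icc.2 (by omega))⟩
      · simp only [forall_mem_image, mem_product, mem_Icc, mem_gridVerts_iff hr]
        intro p hp hgrid
        have h₁ := hf p
        have h₂ := hgrid k
        have h₃ := hexCoord_add hij hik hjk (f p)
        omega
    · have hex : ∀ p : ℤ × ℤ, ∃ v,
          (r + 2 ≤ p.1 + p.2 ∧ hexCoord i v = p.1 ∧ hexCoord j v = p.2 ∧ hexSum v = 2) ∨
          (p.1 + p.2 < r + 2 ∧ hexCoord i v = r + 1 - p.1 ∧ hexCoord j v = r + 1 - p.2 ∧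
            hexSum v = 1) := by
        intro p
        rcases le_or_gt ((r : ℤ) + 2) (p.1 + p.2) with hp | hp
        · obtain ⟨v, hv⟩ := exists_hexCoord_eq hij p.1 p.2 (Or.inr rfl)
          exact ⟨v, Or.inl ⟨hp, hv⟩⟩
        · obtain ⟨v, hv⟩ := exists_hexCoord_eq hij (r + 1 - p.1) (r + 1 - p.2) (Or.inl rfl)
          exact ⟨v, Or.inr ⟨hp, hv⟩⟩
      choose f hf using hex
      refine ⟨(Icc 1 (r : ℤ) ×ˢ Icc 1 (r : ℤ)).image f, ?_, ?_, ?_⟩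
      · rw [card_image_of_injective, card_product, Int.card_Icc]
        · simp [sq]
        · intro p q hpq
          have h₁ := hf p
          have h₂ := hf q
          rw [hpq] at h₁
          ext <;> omega
      · simp only [forall_mem_image, mem_product, mem_Icc]
        intro p hp
        have h₁ := hf p
        exact ⟨hA (mem_Icc.2 (by omega)), hB (mem_Icc.2 (by omega))⟩
      · simp only [forall_mem_image, mem_product, mem_Icc, mem_gridVerts_iff hr]
        intro p hp hgrid
        have h₁ := hf p
        have h₂ := hgrid k
        have h₃ := hexCoord_add hij hik hjk (f p)
        omega
  have hdisj : Disjoint X Y := disjoint_left.2 fun v hv hv' ↦ hYgrid v hv' (hX v hv)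
  rw [← hYcard, ← card_union_of_disjoint hdisj]
  refine card_le_of_coords_mem hij fun v hv ↦ ?_
  rcases mem_union.1 hv with hv | hv
  exacts [h v hv, hYmem v hv]

/-- The vertices of `V(G_r)` are covered by the three rhombi `{c_i ≥ 1, c_{i+2} ≤ 0}`. -/
lemma exists_pos_nonpos (v : ℤ × ℤ) : ∃ i, 1 ≤ hexCoord i v ∧ hexCoord (i + 2) v ≤ 0 := by
  have h := hexSum_eq v
  unfold hexSum at h
  by_contra! hcon
  have h0 := hcon 0
  have h1 := hcon 1
  have h2 := hcon 2
  simp only [Fin.isValue, show (0 : Fin 3) + 2 = 2 from rfl, show (1 : Fin 3) + 2 = 0 from rfl,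
    show (2 : Fin 3) + 2 = 1 from rfl] at h0 h1 h2
  omega

/-- The vertices of `V(G_r)` are covered by the three rhombi `{c_i ≤ 0, c_{i+2} ≥ 1}`. -/
lemma exists_nonpos_pos (v : ℤ × ℤ) : ∃ i, hexCoord i v ≤ 0 ∧ 1 ≤ hexCoord (i + 2) v := by
  have h := hexSum_eq v
  unfold hexSum at h
  by_contra! hcon
  have h0 := hcon 0
  have h1 := hcon 1
  have h2 := hcon 2
  simp only [Fin.isValue, show (0 : Fin 3) + 2 = 2 from rfl, show (1 : Fin 3) + 2 = 0 from rfl,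
    show (2 : Fin 3) + 2 = 1 from rfl] at h0 h1 h2
  omega

lemma six_mul_sq_le_card {r : ℕ} (hr : 1 ≤ r) {X : Finset (ℤ × ℤ)}
    (hX : ∀ v ∈ gridVerts r, v ∈ X) : 6 * r ^ 2 ≤ #X := by
  have hi2 : ∀ i : Fin 3, i ≠ i + 2 := by decide
  have hex : ∀ p : Fin 3 × ℤ × ℤ × ℤ, ∃ v, (p.2.2.2 = 1 ∨ p.2.2.2 = 2) →
      hexCoord p.1 v = p.2.1 ∧ hexCoord (p.1 + 2) v = p.2.2.1 ∧ hexSum v = p.2.2.2 := by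
    intro p
    by_cases hp : p.2.2.2 = 1 ∨ p.2.2.2 = 2
    · obtain ⟨v, hv⟩ := exists_hexCoord_eq (hi2 p.1) p.2.1 p.2.2.1 hp
      exact ⟨v, fun _ ↦ hv⟩
    · exact ⟨0, fun h ↦ absurd h hp⟩
  choose f hf using hex
  have hle : #((univ : Finset (Fin 3)) ×ˢ Icc 1 (r : ℤ) ×ˢ Icc (1 - (r : ℤ)) 0 ×ˢ
      ({1, 2} : Finset ℤ)) ≤ #X := by
    refine card_le_card_of_injOn f (fun p hp ↦ ?_) fun p hp q hq hpq ↦ ?_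
    · simp only [coe_product, Set.mem_prod, mem_coe, mem_univ, mem_Icc, mem_insert,
        mem_singleton, true_and] at hp
      obtain ⟨k, hik, hjk⟩ := exists_third (hi2 p.1)
      have h₁ := hf p hp.2.2
      have h₂ := hexCoord_add (hi2 p.1) hik hjk (f p)
      exact hX _ (mem_gridVerts_of_coords hr (hi2 p.1) hik hjk (by omega) (by omega) (by omega))
    · simp only [coe_product, Set.mem_prod, mem_coe, mem_univ, mem_Icc, mem_insert,
        mem_singleton, true_and] at hp hq
      obtain ⟨i, a, b, e⟩ := p
      obtain ⟨j, a', b', e'⟩ := q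
      have h₁ := hf _ hp.2.2
      have h₂ := hf _ hq.2.2
      rw [hpq] at h₁
      simp only at h₁ h₂ hp hq
      have hij : i = j := by
        by_contra hij
        rcases (by decide : ∀ i j : Fin 3, i ≠ j → i = j + 2 ∨ j = i + 2) i j hij with h | h
        · rw [← h] at h₂; omega
        · rw [← h] at h₁; omega
      subst hij
      simp only [Prod.mk.injEq, true_and]
      omega
  simp only [card_product, card_univ, Fintype.card_fin, Int.card_Icc] at hle
  rw [card_pair (by norm_num)] at hle
  have e₁ : ((r : ℤ) + 1 - 1).toNat = r := by omega
  have e₂ : (0 + 1 - (1 - (r : ℤ))).toNat = r := by omega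
  rw [e₁, e₂] at hle
  nlinarith

open Classical in
/-- Indices of the direction-`i` rows of `G_r` all of whose vertices lie in `S`. -/
noncomputable def fullRows (r : ℕ) (S : Set (ℤ × ℤ)) (i : Fin 3) : Finset ℤ :=
  {a ∈ Icc (1 - (r : ℤ)) r | ∀ v ∈ gridVerts r, hexCoord i v = a → v ∈ S}

lemma mem_fullRows {r : ℕ} {S : Set (ℤ × ℤ)} {i : Fin 3} {a : ℤ} :
    a ∈ fullRows r S i ↔ (1 - (r : ℤ) ≤ a ∧ a ≤ r) ∧
      ∀ v ∈ gridVerts r, hexCoord i v = a → v ∈ S := by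
  simp [fullRows]

lemma fullRows_subset {r : ℕ} {S : Set (ℤ × ℤ)} {i : Fin 3} :
    fullRows r S i ⊆ Icc (1 - (r : ℤ)) r := fun _ ha ↦ mem_Icc.2 (mem_fullRows.1 ha).1

/-- A full row of `S` and a full row of its complement in another direction do not cross. -/
lemma add_of_mem_fullRows {r : ℕ} (hr : 1 ≤ r) {S : Set (ℤ × ℤ)} {i j : Fin 3} (hij : i ≠ j)
    {t u : ℤ} (ht : t ∈ fullRows r S i) (hu : u ∈ fullRows r Sᶜ j) :
    (r : ℤ) + 2 ≤ t + u ∨ t + u ≤ -r := by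
  rw [mem_fullRows] at ht hu
  by_contra! h
  obtain ⟨k, hik, hjk⟩ := exists_third hij
  obtain ⟨e, he, hlo, hhi⟩ : ∃ e : ℤ, (e = 1 ∨ e = 2) ∧ 1 - (r : ℤ) ≤ e - t - u ∧
      e - t - u ≤ r := by
    rcases le_or_gt (t + u) r with h' | h'
    · exact ⟨1, by omega⟩
    · exact ⟨2, by omega⟩
  obtain ⟨v, hi, hj, hs⟩ := exists_hexCoord_eq hij t u he
  have h₂ := hexCoord_add hij hik hjk v
  have hv : v ∈ gridVerts r :=
    mem_gridVerts_of_coords hr hij hik hjk (by omega) (by omega) (by omega)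
  exact hu.2 v hv hj (ht.2 v hv hi)

lemma disjoint_fullRows_compl {r : ℕ} (hr : 1 ≤ r) {S : Set (ℤ × ℤ)} {i : Fin 3} :
    Disjoint (fullRows r S i) (fullRows r Sᶜ i) := by
  rw [disjoint_left]
  intro t ht hu
  rw [mem_fullRows] at ht hu
  have hij : i ≠ i + 1 := (by decide : ∀ i : Fin 3, i ≠ i + 1) i
  obtain ⟨k, hik, hjk⟩ := exists_third hij
  obtain ⟨a, ha⟩ : ∃ a : ℤ, (1 - (r : ℤ) ≤ a ∧ a ≤ r) ∧ 1 - (r : ℤ) ≤ 1 - t - a ∧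
      1 - t - a ≤ r := by
    rcases le_or_gt t 0 with h | h
    · exact ⟨1, by omega⟩
    · exact ⟨0, by omega⟩
  obtain ⟨v, hi, hj, hs⟩ := exists_hexCoord_eq hij t a (Or.inl rfl)
  have h₂ := hexCoord_add hij hik hjk v
  have hv : v ∈ gridVerts r :=
    mem_gridVerts_of_coords hr hij hik hjk (by omega) (by omega) (by omega)
  exact hu.2 v hv hi (ht.2 v hv hi)

/-- Every row that is full neither for `W` nor for its complement contains a boundary vertex. -/
lemma two_mul_le_ncard_hexBdryIn_add {r : ℕ} (hr : 1 ≤ r) {W : Set (ℤ × ℤ)} (hW : W.Finite)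
    (i : Fin 3) :
    2 * r ≤ (hexBdryIn r W).ncard + (#(fullRows r W i) + #(fullRows r Wᶜ i)) := by
  classical
  have hB : (hexBdryIn r W).Finite := hW.subset fun v hv ↦ hv.1
  have hsub : Icc (1 - (r : ℤ)) r ⊆
      hB.toFinset.image (hexCoord i) ∪ (fullRows r W i ∪ fullRows r Wᶜ i) := by
    intro a ha
    by_contra hcon
    simp only [mem_union, not_or, mem_fullRows, mem_Icc.1 ha, true_and, and_self, mem_image,
      Set.Finite.mem_toFinset, Set.mem_compl_iff] at hcon
    push Not at hcon
    obtain ⟨hno, ⟨w, hw, hwa, hwW⟩, v, hv, hva, hvW⟩ := hcon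
    obtain ⟨u, hu, hua⟩ := exists_hexBdryIn_of_mixed_row hr i hv hw hvW hwW (hva.trans hwa.symm)
    exact hno u hu (hua.trans hva)
  have h₁ := (card_le_card hsub).trans ((card_union_le _ _).trans
    (Nat.add_le_add card_image_le (card_union_le _ _)))
  rw [Int.card_Icc, ← Set.ncard_eq_toFinset_card _ hB] at h₁
  omega

/-- If `S` has full rows in at most one direction, then `S` is small. -/
lemma card_le_of_fullRows_eq_empty {r b : ℕ} (hr : 1 ≤ r) {S : Set (ℤ × ℤ)}
    (hb : ∀ i, 2 * r ≤ b + (#(fullRows r S i) + #(fullRows r Sᶜ i)))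
    (hS : ∃ i, ∀ j, j ≠ i → fullRows r S j = ∅) {X : Finset (ℤ × ℤ)}
    (hX : ∀ v ∈ X, v ∈ gridVerts r ∧ v ∈ S) :
    4 * #X ≤ 6 * b ^ 2 + 2 ∨ #X + r ^ 2 ≤ 2 * b ^ 2 := by
  obtain ⟨i, hi⟩ := hS
  set A : Fin 3 → Finset ℤ := fun j ↦ Icc (1 - (r : ℤ)) r \ fullRows r Sᶜ j with hAdef
  have hA : ∀ j, fullRows r S j = ∅ → #(A j) ≤ b := by
    intro j hj
    have h₁ := hb j
    have h₂ := card_sdiff_add_card_eq_card (fullRows_subset (r := r) (S := Sᶜ) (i := j))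
    rw [Int.card_Icc] at h₂
    rw [hj, card_empty] at h₁
    simp only [hAdef]
    omega
  have hXA : ∀ v ∈ X, ∀ j, hexCoord j v ∈ A j := by
    intro v hv j
    simp only [hAdef, mem_sdiff, mem_Icc]
    exact ⟨(mem_gridVerts_iff hr v).1 (hX v hv).1 j,
      fun h ↦ (mem_fullRows.1 h).2 v (hX v hv).1 rfl (hX v hv).2⟩
  rcases (fullRows r S i).eq_empty_or_nonempty with hempty | ⟨t, ht⟩
  · left
    refine card_le_of_forall_coord_mem (fun j ↦ hA j ?_) hXA
    by_cases hji : j = i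
    exacts [hji ▸ hempty, hi j hji]
  · right
    have hij : i ≠ i + 1 := (by decide : ∀ i : Fin 3, i ≠ i + 1) i
    obtain ⟨k, hik, hjk⟩ := exists_third hij
    have hmem : ∀ j, i ≠ j → ∀ u : ℤ, 1 - (r : ℤ) ≤ u → u ≤ r → -r < t + u → t + u < r + 2 →
        u ∈ A j := by
      intro j hj u h₁ h₂ h₃ h₄
      simp only [hAdef, mem_sdiff, mem_Icc]
      refine ⟨⟨h₁, h₂⟩, fun hu ↦ ?_⟩
      have := add_of_mem_fullRows hr hj ht hu
      omega
    have htr := (mem_fullRows.1 ht).1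
    have hle : #X + r ^ 2 ≤ 2 * (#(A (i + 1)) * #(A k)) := by
      refine card_add_sq_le hr hjk (fun v hv ↦ (hX v hv).1)
        (fun v hv ↦ ⟨hXA v hv _, hXA v hv _⟩) ?_
      rcases le_or_gt t 0 with h | h
      · right
        constructor <;> intro u hu <;> rw [mem_Icc] at hu
        · exact hmem _ hij u (by omega) (by omega) (by omega) (by omega)
        · exact hmem _ hik u (by omega) (by omega) (by omega) (by omega)
      · left
        constructor <;> intro u hu <;> rw [mem_Icc] at hu
        · exact hmem _ hij u (by omega) (by omega) (by omega) (by omega)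
        · exact hmem _ hik u (by omega) (by omega) (by omega) (by omega)
    have := Nat.mul_le_mul (hA _ (hi _ hij.symm)) (hA _ (hi _ hik.symm))
    nlinarith

/-- Rows `T i` and `O i` of two kinds such that rows of different kinds and directions never cross.
If there are at least `P` of them in each direction and one of the rows in `T` is on the positive
side and not too far from the center, then all rows are on the positive side and those in `O` are
far from the center. -/
lemma subset_Icc_of_noncrossing {r P : ℤ} {T O : Fin 3 → Finset ℤ}
    (hT : ∀ i, T i ⊆ Icc (1 - r) r) (hO : ∀ i, O i ⊆ Icc (1 - r) r)
    (hTO : ∀ i j, i ≠ j → ∀ t ∈ T i, ∀ u ∈ O j, r + 2 ≤ t + u ∨ t + u ≤ -r)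
    (hcard : ∀ i, P ≤ #(T i ∪ O i)) (hP : r < 2 * P)
    (hOne : ∀ i, ∃ j, j ≠ i ∧ (O j).Nonempty) {i₀ : Fin 3} {t : ℤ} (ht : t ∈ T i₀)
    (ht1 : 1 ≤ t) (htP : t ≤ P) :
    (∀ i, O i ⊆ Icc (P + 1) r) ∧ ∀ i, T i ⊆ Icc 1 r := by
  have htr := mem_Icc.1 (hT _ ht)
  -- a positive row of `O` is far from the center
  have far : ∀ i, ∀ u ∈ O i, 1 ≤ u → P + 1 ≤ u := by
    intro i u hu hu1
    obtain ⟨k, hik, hk⟩ : ∃ k, i ≠ k ∧ i₀ ≠ k :=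
      (by decide : ∀ i i₀ : Fin 3, ∃ k, i ≠ k ∧ i₀ ≠ k) i i₀
    have hur := mem_Icc.1 (hO _ hu)
    have hsub : T k ∪ O k ⊆ Icc (r + 2 - max t u) r := by
      intro w hw
      rw [mem_Icc]
      rcases mem_union.1 hw with hw | hw
      · have h₁ := hTO k i hik.symm w hw u hu
        have h₂ := mem_Icc.1 (hT _ hw)
        omega
      · have h₁ := hTO i₀ k hk t ht w hw
        have h₂ := mem_Icc.1 (hO _ hw)
        omega
    have h₁ := card_le_card hsub
    rw [Int.card_Icc] at h₁
    have h₂ := hcard k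
    omega
  have pos : ∀ j, i₀ ≠ j → ∀ u ∈ O j, 1 ≤ u := by
    intro j hj u hu
    have h₁ := hTO i₀ j hj t ht u hu
    have h₂ := mem_Icc.1 (hO _ hu)
    omega
  obtain ⟨j, hj, u, hu⟩ := hOne i₀
  have hu1 := pos j hj.symm u hu
  have pos' : ∀ i, ∀ u ∈ O i, 1 ≤ u := by
    intro i s hs
    by_cases hi : i₀ = i
    · subst hi
      by_contra! hs0
      obtain ⟨k, hk, hjk⟩ := exists_third hj.symm
      have hempty : T k = ∅ := by
        refine eq_empty_of_forall_notMem fun w hw ↦ ?_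
        have h₁ := hTO k j hjk.symm w hw u hu
        have h₂ := hTO k i₀ hk.symm w hw s hs
        have h₃ := mem_Icc.1 (hO _ hu)
        have h₄ := mem_Icc.1 (hO _ hs)
        have h₅ := mem_Icc.1 (hT _ hw)
        omega
      have hsub : O k ⊆ Icc (P + 1) r := fun w hw ↦
        mem_Icc.2 ⟨far k w hw (pos k hk w hw), (mem_Icc.1 (hO _ hw)).2⟩
      have h₁ := card_le_card hsub
      have h₂ := hcard k
      rw [hempty, empty_union] at h₂
      rw [Int.card_Icc] at h₁
      omega
    · exact pos i hi s hs
  refine ⟨fun i w hw ↦ mem_Icc.2 ⟨far i w hw (pos' i w hw), (mem_Icc.1 (hO _ hw)).2⟩,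
    fun i w hw ↦ ?_⟩
  obtain ⟨j', hj', u', hu'⟩ := hOne i
  have h₁ := hTO i j' hj'.symm w hw u' hu'
  have h₂ := mem_Icc.1 (hT _ hw)
  have h₃ := mem_Icc.1 (hO _ hu')
  have h₄ := pos' j' u' hu'
  rw [mem_Icc]
  omega

/-- The mirror image of `subset_Icc_of_noncrossing` under `t ↦ 1 - t`. -/
lemma subset_Icc_of_noncrossing_of_nonpos {r P : ℤ} {T O : Fin 3 → Finset ℤ}
    (hT : ∀ i, T i ⊆ Icc (1 - r) r) (hO : ∀ i, O i ⊆ Icc (1 - r) r)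
    (hTO : ∀ i j, i ≠ j → ∀ t ∈ T i, ∀ u ∈ O j, r + 2 ≤ t + u ∨ t + u ≤ -r)
    (hcard : ∀ i, P ≤ #(T i ∪ O i)) (hP : r < 2 * P)
    (hOne : ∀ i, ∃ j, j ≠ i ∧ (O j).Nonempty) {i₀ : Fin 3} {t : ℤ} (ht : t ∈ T i₀)
    (ht0 : t ≤ 0) (htP : 1 - t ≤ P) :
    (∀ i, O i ⊆ Icc (1 - r) (-P)) ∧ ∀ i, T i ⊆ Icc (1 - r) 0 := by
  have hinj : Function.Injective (fun a : ℤ ↦ 1 - a) := fun a b h ↦ by simpa using h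
  have h := subset_Icc_of_noncrossing (r := r) (P := P) (i₀ := i₀) (t := 1 - t)
    (T := fun i ↦ (T i).image (1 - ·)) (O := fun i ↦ (O i).image (1 - ·))
    (fun i ↦ image_subset_iff.2 fun a ha ↦ by
      have := mem_Icc.1 (hT i ha); rw [mem_Icc]; omega)
    (fun i ↦ image_subset_iff.2 fun a ha ↦ by
      have := mem_Icc.1 (hO i ha); rw [mem_Icc]; omega)
    (by
      simp only [forall_mem_image]
      intro i j hij a ha b hb
      have := hTO i j hij a ha b hb
      omega)
    (fun i ↦ by rw [← image_union, card_image_of_injective _ hinj]; exact hcard i) hP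
    (fun i ↦ by simpa using hOne i) (mem_image_of_mem _ ht) (by omega) htP
  simp only [image_subset_iff, mem_Icc] at h
  constructor <;> intro i a ha <;> rw [mem_Icc]
  · have := h.1 i a ha; omega
  · have := h.2 i a ha; omega

lemma card_le_of_rhombi {X : Finset (ℤ × ℤ)} {Y Z : Fin 3 → Finset ℤ} {r q : ℕ}
    (hX : ∀ v ∈ X, ∃ i, hexCoord i v ∈ Y i ∧ hexCoord (i + 2) v ∈ Z i)
    (hY : ∀ i, #(Y i) ≤ q) (hZ : ∀ i, #(Z i) ≤ r) : #X ≤ 6 * (q * r) := by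
  classical
  have hsub : X ⊆ univ.biUnion fun i : Fin 3 ↦
      {v ∈ X | hexCoord i v ∈ Y i ∧ hexCoord (i + 2) v ∈ Z i} := by
    intro v hv
    simpa [hv] using hX v hv
  refine ((card_le_card hsub).trans (card_biUnion_le_card_mul _ _ (2 * (q * r))
    fun i _ ↦ ?_)).trans (by simp; linarith)
  refine (card_le_of_coords_mem ((by decide : ∀ i : Fin 3, i ≠ i + 2) i)
    fun v hv ↦ (mem_filter.1 hv).2).trans ?_
  exact Nat.mul_le_mul_left _ (Nat.mul_le_mul (hY i) (hZ i))

/-- If one of the central rows is full for `S` and the complement has full rows in at least two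
directions, then the complement of `S` is small. -/
lemma card_compl_le_of_mem_fullRows {r b : ℕ} (hr : 1 ≤ r) {S : Set (ℤ × ℤ)}
    (hb : ∀ i, 2 * r ≤ b + (#(fullRows r S i) + #(fullRows r Sᶜ i))) (hbr : 4 * b < 5 * r)
    (hSc : ∀ i, ∃ j, j ≠ i ∧ (fullRows r Sᶜ j).Nonempty) {i₀ : Fin 3} {t : ℤ}
    (ht : t ∈ fullRows r S i₀) (ht₁ : t ≤ 2 * r - b) (ht₂ : 1 - t ≤ 2 * r - b)
    {X : Finset (ℤ × ℤ)} (hX : ∀ v ∈ X, v ∈ gridVerts r ∧ v ∉ S) :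
    (#X : ℤ) ≤ 12 * r * (b - r) := by
  have hcard : ∀ i, 2 * (r : ℤ) - b ≤ #(fullRows r S i ∪ fullRows r Sᶜ i) := by
    intro i
    rw [card_union_of_disjoint (disjoint_fullRows_compl hr)]
    have := hb i
    push_cast
    omega
  have hTO : ∀ i j, i ≠ j → ∀ t ∈ fullRows r S i, ∀ u ∈ fullRows r Sᶜ j,
      (r : ℤ) + 2 ≤ t + u ∨ t + u ≤ -r :=
    fun i j hij t ht u hu ↦ add_of_mem_fullRows hr hij ht hu
  have hXrow : ∀ v ∈ X, ∀ i, hexCoord i v ∉ fullRows r S i := fun v hv i h ↦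
    (hX v hv).2 ((mem_fullRows.1 h).2 v (hX v hv).1 rfl)
  have hXgrid : ∀ v ∈ X, ∀ i, 1 - (r : ℤ) ≤ hexCoord i v ∧ hexCoord i v ≤ r := fun v hv ↦
    (mem_gridVerts_iff hr v).1 (hX v hv).1
  suffices h : r ≤ b ∧ #X ≤ 6 * (2 * (b - r) * r) by
    obtain ⟨hrb, h⟩ := h
    zify [hrb] at h
    linarith
  rcases le_or_gt 1 t with h | h
  · obtain ⟨hO, hT⟩ := subset_Icc_of_noncrossing (P := 2 * (r : ℤ) - b)
      (fun i ↦ fullRows_subset) (fun i ↦ fullRows_subset) hTO hcard (by omega) hSc ht h ht₁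
    have hY : ∀ i, r ≤ b ∧ #(Icc 1 (r : ℤ) \ fullRows r S i) ≤ 2 * (b - r) := by
      intro i
      have h₁ := card_le_card (hO i)
      have h₂ := card_sdiff_add_card_eq_card (hT i)
      have h₃ := hb i
      have h₄ := card_le_card (hT i)
      rw [Int.card_Icc] at h₁ h₂ h₄
      omega
    refine ⟨(hY 0).1, card_le_of_rhombi (Y := fun i ↦ Icc 1 (r : ℤ) \ fullRows r S i)
      (Z := fun _ ↦ Icc (1 - (r : ℤ)) 0) (fun v hv ↦ ?_) (fun i ↦ (hY i).2) (by simp)⟩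
    obtain ⟨i, hi⟩ := exists_pos_nonpos v
    exact ⟨i, mem_sdiff.2 ⟨mem_Icc.2 ⟨hi.1, (hXgrid v hv i).2⟩, hXrow v hv i⟩,
      mem_Icc.2 ⟨(hXgrid v hv _).1, hi.2⟩⟩
  · obtain ⟨hO, hT⟩ := subset_Icc_of_noncrossing_of_nonpos (P := 2 * (r : ℤ) - b)
      (fun i ↦ fullRows_subset) (fun i ↦ fullRows_subset) hTO hcard (by omega) hSc ht
      (by omega) ht₂
    have hY : ∀ i, r ≤ b ∧ #(Icc (1 - (r : ℤ)) 0 \ fullRows r S i) ≤ 2 * (b - r) := by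
      intro i
      have h₁ := card_le_card (hO i)
      have h₂ := card_sdiff_add_card_eq_card (hT i)
      have h₃ := hb i
      have h₄ := card_le_card (hT i)
      rw [Int.card_Icc] at h₁ h₂ h₄
      omega
    refine ⟨(hY 0).1, card_le_of_rhombi (Y := fun i ↦ Icc (1 - (r : ℤ)) 0 \ fullRows r S i)
      (Z := fun _ ↦ Icc 1 (r : ℤ)) (fun v hv ↦ ?_) (fun i ↦ (hY i).2) (by simp)⟩
    obtain ⟨i, hi⟩ := exists_nonpos_pos v
    exact ⟨i, mem_sdiff.2 ⟨mem_Icc.2 ⟨(hXgrid v hv i).1, hi.1⟩, hXrow v hv i⟩,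
      mem_Icc.2 ⟨hi.2, (hXgrid v hv _).2⟩⟩

/-- Few non-pure rows force a pure row near the center. -/
lemma exists_central_fullRow {r b : ℕ} {S : Set (ℤ × ℤ)}
    (hb : ∀ i, 2 * r ≤ b + (#(fullRows r S i) + #(fullRows r Sᶜ i))) (hbr : 4 * b < 5 * r)
    (hr : 1 ≤ r) (i : Fin 3) :
    ∃ t : ℤ, t ≤ 2 * r - b ∧ 1 - t ≤ 2 * r - b ∧
      (t ∈ fullRows r S i ∨ t ∈ fullRows r Sᶜ i) := by
  by_contra! hcon
  have hsub : fullRows r S i ∪ fullRows r Sᶜ i ⊆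
      Icc (1 - (r : ℤ)) (-(2 * r - b)) ∪ Icc (2 * (r : ℤ) - b + 1) r := by
    intro t ht
    have h₁ := hcon t
    have h₂ : 1 - (r : ℤ) ≤ t ∧ t ≤ r :=
      mem_Icc.1 (union_subset fullRows_subset fullRows_subset ht)
    rw [mem_union] at ht
    simp only [mem_union, mem_Icc]
    by_contra! h₃
    have h₄ := h₁ (by omega) (by omega)
    tauto
  have h₁ := (card_le_card hsub).trans (card_union_le _ _)
  rw [card_union_of_disjoint (disjoint_fullRows_compl hr), Int.card_Icc, Int.card_Icc] at h₁
  have := hb i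
  omega

/-- The isoperimetric estimate in integers, with `b` an upper bound for the numbers of mixed rows. -/
lemma card_le_of_two_mul_le_add_fullRows {r b : ℕ} (hr : 1 ≤ r) {W : Set (ℤ × ℤ)}
    (hb : ∀ i, 2 * r ≤ b + (#(fullRows r W i) + #(fullRows r Wᶜ i)))
    {X X' : Finset (ℤ × ℤ)} (hX : ∀ v ∈ X, v ∈ gridVerts r ∧ v ∈ W)
    (hX' : ∀ v ∈ X', v ∈ gridVerts r ∧ v ∉ W) (hcard : #X ≤ 3 * r ^ 2)
    (hcard' : 3 * r ^ 2 ≤ #X') :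
    25 * #X ≤ 48 * b ^ 2 + 25 * b := by
  have hbc : ∀ i, 2 * r ≤ b + (#(fullRows r Wᶜ i) + #(fullRows r Wᶜᶜ i)) := by
    intro i
    rw [compl_compl, add_comm #(fullRows r Wᶜ i)]
    exact hb i
  rcases le_or_gt (5 * r) (4 * b) with hbr | hbr
  · nlinarith
  by_cases hF : ∃ i, ∀ j, j ≠ i → fullRows r W j = ∅
  · rcases card_le_of_fullRows_eq_empty hr hb hF hX with h | h
    · rcases Nat.eq_zero_or_pos b with rfl | hb0
      · omega
      · nlinarith
    · nlinarith
  by_cases hE : ∃ i, ∀ j, j ≠ i → fullRows r Wᶜ j = ∅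
  · exfalso
    rcases card_le_of_fullRows_eq_empty hr hbc hE hX' with h | h
    · nlinarith
    · nlinarith
  simp only [not_exists, not_forall, ← ne_eq, ← nonempty_iff_ne_empty, exists_prop] at hF hE
  obtain ⟨t, ht₁, ht₂, ht | ht⟩ := exists_central_fullRow hb hbr hr 0
  · exfalso
    have h := card_compl_le_of_mem_fullRows hr hb hbr hE ht ht₁ ht₂ hX'
    zify at hcard' hbr hr
    nlinarith
  · have h := card_compl_le_of_mem_fullRows hr hbc hbr (by simpa using hF) ht ht₁ ht₂
      (X := X) (fun v hv ↦ by simpa using hX v hv)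
    zify at hbr hr ⊢
    nlinarith

/-- For every `0 ≤ c < √6 - √3` there is a radius `R_c` beyond which
`|ℬ_{G_r}(W)| ≥ c·√(|W| + c²/4) - c²/2` holds for all `W ⊆ V(G_r)` with `|W| ≤ 3r²`. -/
theorem finite_hex_boundary_isoperimetric_large_radius (c : ℝ) (hc0 : 0 ≤ c)
    (hc : c < Real.sqrt 6 - Real.sqrt 3) :
    ∃ R : ℕ, ∀ r : ℕ, R ≤ r → ∀ W : Set (ℤ × ℤ), W ⊆ gridVerts r → W.Finite →
      W.ncard ≤ 3*r^2 →
        c * Real.sqrt ((W.ncard : ℝ) + c^2 / 4) - c^2 / 2 ≤ ((hexBdryIn r W).ncard : ℝ) := by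
  refine ⟨1, fun r hr W hW hfin hcard ↦ ?_⟩
  have hsub : hfin.toFinset ⊆ (gridVerts_finite hr).toFinset := by simpa using hW
  have hgrid : 6 * r ^ 2 ≤ #(gridVerts_finite hr).toFinset :=
    six_mul_sq_le_card hr fun v hv ↦ by simpa using hv
  have hcompl := card_sdiff_add_card_eq_card hsub
  have hn := Set.ncard_eq_toFinset_card W hfin
  have key := card_le_of_two_mul_le_add_fullRows hr (two_mul_le_ncard_hexBdryIn_add hr hfin)
    (X := hfin.toFinset) (X' := (gridVerts_finite hr).toFinset \ hfin.toFinset)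
    (fun v hv ↦ ⟨hW (by simpa using hv), by simpa using hv⟩) (fun v hv ↦ by simpa using hv)
    (by omega) (by omega)
  rw [← hn] at key
  have hle : (hexBdryIn r W).ncard ≤ W.ncard := Set.ncard_le_ncard (fun v hv ↦ hv.1) hfin
  generalize (hexBdryIn r W).ncard = b at key hle ⊢
  generalize W.ncard = n at key hle ⊢
  replace key : 25 * (n : ℝ) ≤ 48 * (b : ℝ) ^ 2 + 25 * b := by exact_mod_cast key
  replace hle : (b : ℝ) ≤ n := by exact_mod_cast hle
  have hc2 : c ^ 2 ≤ 25 / 48 := by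
    have h6 : √6 ≤ 2.45 := Real.sqrt_le_iff.2 (by norm_num)
    have h3 : 1.73 ≤ √3 := Real.le_sqrt_of_sq_le (by norm_num)
    nlinarith
  have hmul : c ^ 2 * (n - b) ≤ 25 / 48 * ((n : ℝ) - b) :=
    mul_le_mul_of_nonneg_right hc2 (sub_nonneg.2 hle)
  have hsqrt : c * √((n : ℝ) + c ^ 2 / 4) = √(c ^ 2 * (n + c ^ 2 / 4)) := by
    rw [Real.sqrt_mul (sq_nonneg c), Real.sqrt_sq hc0]
  rw [hsqrt, sub_le_iff_le_add]
  refine Real.sqrt_le_iff.2 ⟨by positivity, ?_⟩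
  nlinarith
end

section
/- For every integer r ≥ 1, every vertex of the infinite hexagonal grid G∞ that does not belong to V(G_r) is adjacent to at most one vertex of V(G_r). -/
/-- `V(G_r)` is cut out of the grid by three strips of rows, one for each direction. -/
theorem mem_gridVerts_iff_s19 (r : ℕ) (hr : 1 ≤ r) (x y : ℤ) :
    (x, y) ∈ gridVerts r ↔
      (1 - r ≤ y ∧ y ≤ r) ∧ (-(2 * r) ≤ y - x ∧ y - x ≤ 2 * r - 1) ∧
        (2 - 2 * r ≤ x + y ∧ x + y ≤ 2 * r + 1) := by
  simp only [gridVerts, hexCell, Set.mem_ofPred_eq, Set.mem_insert_iff, Set.mem_singleton_iff,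
    Prod.mk.injEq]
  constructor
  · rintro ⟨a, b, h, hc⟩
    have ha : a.natAbs ≤ r - 1 := by omega
    have hb : b.natAbs ≤ r - 1 := by omega
    have hab : (a + b).natAbs ≤ r - 1 := by omega
    clear h
    omega
  · rintro ⟨hy, hd, hs⟩
    -- It suffices to bound the three cell coordinates separately.
    suffices h : ∃ a b : ℤ, (1 - r ≤ a ∧ a ≤ r - 1) ∧ (1 - r ≤ b ∧ b ≤ r - 1) ∧
        (1 - r ≤ a + b ∧ a + b ≤ r - 1) ∧ (b = y ∨ b + 1 = y) ∧
        (2 * a + b = x ∨ 2 * a + b + 1 = x ∨ 2 * a + b + 2 = x) by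
      obtain ⟨a, b, ha, hb, hab, hby, hx⟩ := h
      exact ⟨a, b, by omega, by omega⟩
    obtain ⟨k, hk | hk⟩ := Int.even_or_odd' (x - y)
    · by_cases h₁ : y = r
      · exact ⟨k, y - 1, by omega⟩
      · by_cases h₂ : k = r ∨ k + y = r
        · exact ⟨k - 1, y, by omega⟩
        · exact ⟨k, y, by omega⟩
    · by_cases h₁ : y = 1 - r
      · exact ⟨k, y, by omega⟩
      · by_cases h₂ : k = -r ∨ k + y = 1 - r
        · exact ⟨k + 1, y - 1, by omega⟩
        · exact ⟨k, y - 1, by omega⟩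

/-- For every `r ≥ 1`, every vertex outside `V(G_r)` is adjacent to at most one vertex
of `V(G_r)`. -/
theorem outside_vertex_at_most_one_neighbor (r : ℕ) (hr : 1 ≤ r) (v : ℤ × ℤ)
    (hv : v ∉ gridVerts r) (w w' : ℤ × ℤ) (hw : w ∈ gridVerts r) (hw' : w' ∈ gridVerts r)
    (h1 : hexAdj v w) (h2 : hexAdj v w') : w = w' := by
  obtain ⟨x, y⟩ := v
  obtain ⟨x₁, y₁⟩ := w
  obtain ⟨x₂, y₂⟩ := w'
  rw [mem_gridVerts_iff_s19 r hr] at hv hw hw'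
  simp only [hexAdj, Int.even_iff] at h1 h2
  rw [Prod.mk.injEq]
  rcases h1 with ⟨h1, h1'⟩ | ⟨h1, h1', h1''⟩ <;> rcases h2 with ⟨h2, h2'⟩ | ⟨h2, h2', h2''⟩ <;>
    omega
end
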